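/- Let g(x) be a monic divisor of x^n - 1 in F_q[x] with deg(g(x)) < n and g(x) h(x) = x^n - 1, and let r1(x), r2(x) in F_q[x] satisfy gcd(r_i(x), h(x)) = 1 for i = 1, 2. Let C be the one-generator quasi-cyclic code of length 2n and index 2 generated by the images in R of (r1(x)g(x), r2(x)g(x)), and let d_H be the minimum Hamming weight of the nonzero cyclic code of length n generated by g(x). Then every nonzero codeword of C has Hamming weight at least 2 d_H. -/

import Mathlib

open Polynomial Matrix

noncomputable section

variable {F : Type*} [Field F] {n : ℕ}

/-- The symplectic inner product on `F^{2n}`. -/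
def sympForm (u v : (Fin n ⊕ Fin n) → F) : F :=
  (∑ i : Fin n, u (Sum.inl i) * v (Sum.inr i)) -
    ∑ i : Fin n, v (Sum.inl i) * u (Sum.inr i)

lemma sympForm_add_left (u w v : (Fin n ⊕ Fin n) → F) :
    sympForm (u + w) v = sympForm u v + sympForm w v := by
  simp [sympForm, add_mul, mul_add, Finset.sum_add_distrib]
  ring

lemma sympForm_smul_left (c : F) (u v : (Fin n ⊕ Fin n) → F) :
    sympForm (c • u) v = c * sympForm u v := by
  simp [sympForm, Finset.mul_sum, mul_sub, mul_assoc, mul_left_comm]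

/-- The symplectic dual of a subspace of `F^{2n}`. -/
def sympDual (C : Submodule F ((Fin n ⊕ Fin n) → F)) :
    Submodule F ((Fin n ⊕ Fin n) → F) where
  carrier := {u | ∀ v ∈ C, sympForm u v = 0}
  add_mem' := by
    intro a b ha hb v hv
    rw [sympForm_add_left, ha v hv, hb v hv, add_zero]
  zero_mem' := by
    intro v hv
    have : (0 : (Fin n ⊕ Fin n) → F) = (0 : F) • 0 := by simp
    rw [this, sympForm_smul_left, zero_mul]
  smul_mem' := by
    intro c a ha v hv
    rw [sympForm_smul_left, ha v hv, mul_zero]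

/-- The `2n × 2n` symplectic matrix `Ω`. -/
def Omat (F : Type*) [Field F] (n : ℕ) : Matrix (Fin n ⊕ Fin n) (Fin n ⊕ Fin n) F :=
  Matrix.fromBlocks 0 1 (-1) 0

/-- The row space of a matrix. -/
def rowSpace {ι κ : Type*} (M : Matrix ι κ F) : Submodule F (κ → F) :=
  Submodule.span F (Set.range fun i => M i)

lemma monic_xn_sub_one (F : Type*) [Field F] {n : ℕ} (hn : n ≠ 0) :
    (X ^ n - 1 : F[X]).Monic := by
  simpa using Polynomial.monic_X_pow_sub_C (1 : F) hn

/-- The coefficient vector of the canonical degree `< n` representative of an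
element of `R = F[x]/(x^n - 1)`, as an `F`-linear map. -/
def toVecL (hn : n ≠ 0) : AdjoinRoot (X ^ n - 1 : F[X]) →ₗ[F] (Fin n → F) :=
  (LinearMap.pi fun i : Fin n => Polynomial.lcoeff F (i : ℕ)) ∘ₗ
    AdjoinRoot.modByMonicHom (monic_xn_sub_one F hn)

/-- The linear map `r ↦ (r·a, r·b)` from `R` to `F^{2n}`. -/
def QCgen (hn : n ≠ 0) (a b : AdjoinRoot (X ^ n - 1 : F[X])) :
    AdjoinRoot (X ^ n - 1 : F[X]) →ₗ[F] ((Fin n ⊕ Fin n) → F) :=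
  LinearMap.pi (Sum.elim
    (fun i => LinearMap.proj i ∘ₗ toVecL hn ∘ₗ LinearMap.mulRight F a)
    (fun i => LinearMap.proj i ∘ₗ toVecL hn ∘ₗ LinearMap.mulRight F b))

/-- The one-generator quasi-cyclic code of length `2n` and index `2`
generated by `(a(x), b(x))`, as a subspace of `F^{2n}`. -/
def QCcode (hn : n ≠ 0) (a b : AdjoinRoot (X ^ n - 1 : F[X])) :
    Submodule F ((Fin n ⊕ Fin n) → F) :=
  LinearMap.range (QCgen hn a b)

/-- The element of `R` with coefficient vector `v`. -/
def fromVec (v : Fin n → F) : AdjoinRoot (X ^ n - 1 : F[X]) :=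
  AdjoinRoot.mk _ (∑ i : Fin n, Polynomial.C (v i) * X ^ (i : ℕ))

/-- The transpose polynomial `ā(x) = x^n a(x⁻¹) mod (x^n - 1)`. -/
def transposePoly (hn : n ≠ 0) (a : AdjoinRoot (X ^ n - 1 : F[X])) :
    AdjoinRoot (X ^ n - 1 : F[X]) :=
  fromVec (fun i => toVecL hn a (-i))

/-- The cyclic code of length `n` generated by (the image of) `g(x)`. -/
def cyclicCode (hn : n ≠ 0) (g : F[X]) : Submodule F (Fin n → F) :=
  LinearMap.range (toVecL hn ∘ₗ
    LinearMap.mulRight F (AdjoinRoot.mk (X ^ n - 1 : F[X]) g))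

/-- The Hamming weight of a vector. -/
def hWeight {ι : Type*} (u : ι → F) : ℕ := {i | u i ≠ 0}.ncard

/-! A codeword of `C` is `(s r₁ g, s r₂ g)` for some `s`, and both halves lie in the cyclic code
generated by `g`. Since `rᵢ` is invertible modulo `h` and `g h = 0` in `R`, each half vanishes
exactly when `s g = 0`. Hence both halves of a nonzero codeword are nonzero, and each contributes
at least `d_H` to the weight. -/

lemma mul_mul_eq_zero_iff_of_isCoprime {A : Type*} [CommSemiring A] {g h r : A}
    (hgh : g * h = 0) (hr : IsCoprime r h) (s : A) : s * (r * g) = 0 ↔ s * g = 0 := by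
  refine ⟨fun hs => ?_, fun hs => by rw [mul_left_comm, hs, mul_zero]⟩
  obtain ⟨u, v, huv⟩ := hr
  calc
    s * g = (u * r + v * h) * (s * g) := by rw [huv, one_mul]
    _ = u * (s * (r * g)) + v * s * (g * h) := by ring
    _ = 0 := by rw [hs, hgh, mul_zero, mul_zero, add_zero]

lemma mul_mk_mul_eq_zero_iff_of_isCoprime {A : Type*} [CommRing A] {f g h r : A[X]}
    (hgh : f ∣ g * h) (hr : IsCoprime r h) (s : AdjoinRoot f) :
    s * AdjoinRoot.mk f (r * g) = 0 ↔ s * AdjoinRoot.mk f g = 0 := by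
  rw [map_mul]
  refine mul_mul_eq_zero_iff_of_isCoprime ?_ (hr.map (AdjoinRoot.mk f)) s
  rwa [← map_mul, AdjoinRoot.mk_eq_zero]

lemma hWeight_eq_hWeight_inl_add_hWeight_inr {ι κ : Type*} [Finite ι] [Finite κ]
    (c : ι ⊕ κ → F) : hWeight c = hWeight (c ∘ Sum.inl) + hWeight (c ∘ Sum.inr) := by
  unfold hWeight
  rw [← Set.image_preimage_inl_union_image_preimage_inr {i | c i ≠ 0},
    Set.ncard_union_eq Set.disjoint_image_inl_image_inr,
    Set.ncard_image_of_injective _ Sum.inl_injective,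
    Set.ncard_image_of_injective _ Sum.inr_injective]
  rfl

lemma toVecL_injective (hn : n ≠ 0) : Function.Injective (toVecL (F := F) hn) := by
  intro a b hab
  have hdeg : (X ^ n - 1 : F[X]).natDegree = n := natDegree_X_pow_sub_C (r := 1)
  refine (AdjoinRoot.powerBasisAux' (monic_xn_sub_one F hn)).ext_elem fun i => ?_
  -- Coordinates in the power basis unfold to the entries of `toVecL`.
  exact congrFun hab (i.cast hdeg)

lemma toVecL_eq_zero_iff (hn : n ≠ 0) {a : AdjoinRoot (X ^ n - 1 : F[X])} :
    toVecL hn a = 0 ↔ a = 0 :=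
  map_eq_zero_iff _ (toVecL_injective hn)

lemma QCgen_comp_inl (hn : n ≠ 0) (a b s : AdjoinRoot (X ^ n - 1 : F[X])) :
    QCgen hn a b s ∘ Sum.inl = toVecL hn (s * a) :=
  rfl

lemma QCgen_comp_inr (hn : n ≠ 0) (a b s : AdjoinRoot (X ^ n - 1 : F[X])) :
    QCgen hn a b s ∘ Sum.inr = toVecL hn (s * b) :=
  rfl

lemma QCgen_eq_zero_iff (hn : n ≠ 0) {a b s : AdjoinRoot (X ^ n - 1 : F[X])} :
    QCgen hn a b s = 0 ↔ s * a = 0 ∧ s * b = 0 := by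
  rw [← toVecL_eq_zero_iff hn, ← toVecL_eq_zero_iff hn, ← QCgen_comp_inl hn a b,
    ← QCgen_comp_inr hn a b]
  simp only [funext_iff, Sum.forall, Function.comp_apply, Pi.zero_apply]

lemma toVecL_mul_mk_mem_cyclicCode (hn : n ≠ 0) (g : F[X])
    (s : AdjoinRoot (X ^ n - 1 : F[X])) :
    toVecL hn (s * AdjoinRoot.mk _ g) ∈ cyclicCode hn g :=
  ⟨s, rfl⟩

lemma cyclicCode_mul_le (hn : n ≠ 0) (r g : F[X]) : cyclicCode hn (r * g) ≤ cyclicCode hn g := by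
  rintro _ ⟨s, rfl⟩
  rw [LinearMap.comp_apply, LinearMap.mulRight_apply, map_mul (AdjoinRoot.mk _), ← mul_assoc]
  exact toVecL_mul_mk_mem_cyclicCode hn g (s * AdjoinRoot.mk _ r)

lemma add_le_hWeight_of_mem_QCcode (hn : n ≠ 0) {a b : F[X]}
    (hab : ∀ s : AdjoinRoot (X ^ n - 1 : F[X]),
      s * AdjoinRoot.mk _ a = 0 ↔ s * AdjoinRoot.mk _ b = 0)
    {d e : ℕ} (hd : ∀ u ∈ cyclicCode hn a, u ≠ 0 → d ≤ hWeight u)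
    (he : ∀ v ∈ cyclicCode hn b, v ≠ 0 → e ≤ hWeight v) {c : Fin n ⊕ Fin n → F}
    (hc : c ∈ QCcode hn (AdjoinRoot.mk _ a) (AdjoinRoot.mk _ b)) (hc₀ : c ≠ 0) :
    d + e ≤ hWeight c := by
  obtain ⟨s, rfl⟩ := hc
  have hsa : s * AdjoinRoot.mk _ a ≠ 0 := fun h =>
    hc₀ ((QCgen_eq_zero_iff hn).2 ⟨h, (hab s).1 h⟩)
  have hsb : s * AdjoinRoot.mk _ b ≠ 0 := mt (hab s).2 hsa
  rw [hWeight_eq_hWeight_inl_add_hWeight_inr, QCgen_comp_inl, QCgen_comp_inr]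
  exact add_le_add
    (hd _ (toVecL_mul_mk_mem_cyclicCode hn a s) ((toVecL_eq_zero_iff hn).not.2 hsa))
    (he _ (toVecL_mul_mk_mem_cyclicCode hn b s) ((toVecL_eq_zero_iff hn).not.2 hsb))

theorem oneGenQC_weight_lower_bound_general (hn : n ≠ 0) (g h r₁ r₂ : F[X])
    (hgh : X ^ n - 1 ∣ g * h) (hr₁ : IsCoprime r₁ h) (hr₂ : IsCoprime r₂ h) (d : ℕ)
    (hd : IsLeast {w | ∃ c ∈ cyclicCode (F := F) hn g, c ≠ 0 ∧ hWeight c = w} d) :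
    ∀ c ∈ QCcode hn (AdjoinRoot.mk (X ^ n - 1 : F[X]) (r₁ * g))
        (AdjoinRoot.mk (X ^ n - 1 : F[X]) (r₂ * g)),
      c ≠ 0 → 2 * d ≤ hWeight c := by
  intro c hc hc₀
  have le_hWeight (r : F[X]) : ∀ u ∈ cyclicCode hn (r * g), u ≠ 0 → d ≤ hWeight u :=
    fun u hu hu₀ => hd.2 ⟨u, cyclicCode_mul_le hn r g hu, hu₀, rfl⟩
  have mul_eq_zero_iff (s : AdjoinRoot (X ^ n - 1 : F[X])) :
      s * AdjoinRoot.mk _ (r₁ * g) = 0 ↔ s * AdjoinRoot.mk _ (r₂ * g) = 0 :=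
    (mul_mk_mul_eq_zero_iff_of_isCoprime hgh hr₁ s).trans
      (mul_mk_mul_eq_zero_iff_of_isCoprime hgh hr₂ s).symm
  rw [two_mul]
  exact add_le_hWeight_of_mem_QCcode hn mul_eq_zero_iff (le_hWeight r₁) (le_hWeight r₂) hc hc₀

/-- If `C = (r₁(x)g(x), r₂(x)g(x))` with `g h = xⁿ - 1`,
`deg g < n` and `gcd(rᵢ, h) = 1`, and `d_H` is the minimum Hamming weight of
the nonzero cyclic code generated by `g(x)`, then every nonzero codeword of
`C` has Hamming weight at least `2 d_H`. -/
theorem oneGenQC_weight_lower_bound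
    {F : Type*} [Field F] [Fintype F] {n : ℕ} (hn : n ≠ 0)
    (g h r₁ r₂ : F[X]) (hg : g.Monic) (hdeg : g.natDegree < n)
    (hgh : g * h = X ^ n - 1)
    (hr₁ : IsCoprime r₁ h) (hr₂ : IsCoprime r₂ h)
    (d : ℕ)
    (hd : IsLeast {w | ∃ c ∈ cyclicCode (F := F) hn g, c ≠ 0 ∧ hWeight c = w} d) :
    ∀ c ∈ QCcode hn (AdjoinRoot.mk (X ^ n - 1 : F[X]) (r₁ * g))
        (AdjoinRoot.mk (X ^ n - 1 : F[X]) (r₂ * g)),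
      c ≠ 0 → 2 * d ≤ hWeight c :=
  oneGenQC_weight_lower_bound_general hn g h r₁ r₂ hgh.symm.dvd hr₁ hr₂ d hd

end
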